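/- For every natural number N ≥ 1 and parameters α, β ≠ 0, τ with all denominators nonzero: F_N(α,β;τ) = (1-τ q^N) ∑_{n=0}^{N} [N choose n] (αq;q)_n (q;q)_n (ατq/β;q)_n (ατq^2;q)_{N-1} (τβ)^n q^{n^2} (1-ατ q^{2n+1}) / ((βq;q)_n (τ;q)_{n+1} (ατq^2;q)_{N+n}), where F_N(α,β;τ) := ∑_{n=0}^{N} [N choose n] (αq;q)_n (τ;q)_{N-n} (q;q)_n τ^n / ((βq;q)_n (τ;q)_N). (Finite analogue of the Rogers–Fine identity.) -/

import Mathlib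

open Finset

/-- q-Pochhammer symbol (a;q)_n = ∏_{k=0}^{n-1} (1 - a q^k). -/
noncomputable def qP (a q : ℂ) (n : ℕ) : ℂ := ∏ k ∈ Finset.range n, (1 - a * q ^ k)

/-- Gaussian (q-)binomial coefficient [N choose n]_q. -/
noncomputable def qBinom (q : ℂ) (N n : ℕ) : ℂ := qP q q N / (qP q q n * qP q q (N - n))

/-- Finite analogue of Fine's function. -/
noncomputable def fineN (q : ℂ) (N : ℕ) (a b t : ℂ) : ℂ :=
  ∑ n ∈ Finset.range (N + 1),
    qBinom q N n * (qP (a * q) q n * qP t q (N - n) * qP q q n * t ^ n /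
      (qP (b * q) q n * qP t q N))

/-!
Let `T n` be the summands of `F_N(a, b; t)`. Since `T (n + 1) / T n` is rational in `q ^ n`, some
combination of `T (n + 1)` and `(q ^ (n + 1) - t q ^ N) T (n + 1)` telescopes. The second expression
is a multiple of the `n`-th summand of `F_{N-1}(aq, bq; tq)`, so summing gives a first-order
recurrence from `F_{N-1}(aq, bq; tq)` to `F_N(a, b; t)`. On the Rogers–Fine side no telescoping is
needed: the summand of index `n + 1` is the coefficient of this recurrence times the shifted summand
of index `n`, and the summand of index `0` is the inhomogeneous term.

Writing `[N choose n] (q; q)_n = (q ^ (N + 1 - n); q)_n` removes every division by `1 - q ^ k`, so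
`q` may be a root of unity; writing `(c / b; q)_n b ^ n = ∏ k < n, (b - c q ^ k)` allows `b = 0`.
-/

/-- The `q`-Pochhammer symbol `(a; q)_n` over an arbitrary commutative ring. -/
def qPochhammer {R : Type*} [CommRing R] (a q : R) (n : ℕ) : R := ∏ k ∈ range n, (1 - a * q ^ k)

section CommRing

variable {R : Type*} [CommRing R] (a q : R)

@[simp]
theorem qPochhammer_zero : qPochhammer a q 0 = 1 := prod_range_zero _

theorem qPochhammer_succ_right (n : ℕ) :
    qPochhammer a q (n + 1) = qPochhammer a q n * (1 - a * q ^ n) :=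
  prod_range_succ _ n

theorem qPochhammer_add (m n : ℕ) :
    qPochhammer a q (m + n) = qPochhammer a q m * qPochhammer (a * q ^ m) q n := by
  simp only [qPochhammer, prod_range_add, pow_add, mul_assoc]

theorem qPochhammer_succ_left (n : ℕ) :
    qPochhammer a q (n + 1) = (1 - a) * qPochhammer (a * q) q n := by
  rw [add_comm, qPochhammer_add, qPochhammer_succ_right, qPochhammer_zero, one_mul, pow_zero,
    mul_one, pow_one]

theorem qPochhammer_sub_mul {m n : ℕ} (h : n ≤ m) :
    qPochhammer a q (m - n) * qPochhammer (a * q ^ (m - n)) q n = qPochhammer a q m := by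
  rw [← qPochhammer_add, Nat.sub_add_cancel h]

theorem qPochhammer_ne_zero [IsDomain R] {a q : R} {n : ℕ} (h : ∀ k < n, 1 - a * q ^ k ≠ 0) :
    qPochhammer a q n ≠ 0 :=
  prod_ne_zero_iff.2 fun k hk => h k (mem_range.1 hk)

theorem qPochhammer_ne_zero_of_le {a q : R} {m n : ℕ} (h : qPochhammer a q n ≠ 0) (hmn : m ≤ n) :
    qPochhammer a q m ≠ 0 := by
  obtain ⟨k, rfl⟩ := Nat.exists_eq_add_of_le hmn
  exact left_ne_zero_of_mul (qPochhammer_add a q m k ▸ h)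

end CommRing

theorem prod_sub_mul_pow_eq {K : Type*} [Field K] {b : K} (hb : b ≠ 0) (c q : K) (n : ℕ) :
    ∏ k ∈ range n, (b - c * q ^ k) = qPochhammer (c / b) q n * b ^ n := by
  rw [qPochhammer, pow_eq_prod_const, ← prod_mul_distrib]
  exact prod_congr rfl fun k _ => by field_simp

theorem prod_succ_sub_mul_pow {R : Type*} [CommRing R] (b c q : R) (n : ℕ) :
    (∏ k ∈ range (n + 1), (b - c * q ^ k)) * q ^ n =
      (b - c) * ∏ k ∈ range n, (b * q - c * q ^ 2 * q ^ k) := by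
  rw [prod_range_succ', mul_right_comm, pow_eq_prod_const q n, ← prod_mul_distrib, pow_zero,
    mul_one, mul_comm]
  exact congrArg _ (prod_congr rfl fun k _ => by ring)

/-- The summand `[N choose n] (q; q)_n (a q; q)_n (t; q)_{N - n} t ^ n / ((b q; q)_n (t; q)_N)` of
the finite Fine function, simplified by `(q; q)_N / (q; q)_{N - n} = (q ^ (N + 1 - n); q)_n` and
`(t; q)_N / (t; q)_{N - n} = (t q ^ (N - n); q)_n`. -/
def fineTerm {K : Type*} [Field K] (q : K) (N : ℕ) (a b t : K) (n : ℕ) : K :=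
  qPochhammer (q ^ (N + 1 - n)) q n * qPochhammer (a * q) q n * t ^ n /
    (qPochhammer (b * q) q n * qPochhammer (t * q ^ (N - n)) q n)

/-- The `n`-th summand of the finite Rogers–Fine series, simplified by
`(a t q ^ 2; q)_{N + n} / (a t q ^ 2; q)_{N - 1} = (a t q ^ (N + 1); q)_{n + 1}`. -/
def rogersFineTerm {K : Type*} [Field K] (q : K) (N : ℕ) (a b t : K) (n : ℕ) : K :=
  qPochhammer (q ^ (N + 1 - n)) q n * qPochhammer (a * q) q n *
      (∏ k ∈ range n, (b - a * t * q * q ^ k)) * t ^ n * q ^ (n ^ 2) *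
      (1 - a * t * q ^ (2 * n + 1)) /
    (qPochhammer (b * q) q n * qPochhammer t q (n + 1) *
      qPochhammer (a * t * q ^ (N + 1)) q (n + 1))

section Recurrence

variable {K : Type*} [Field K] {q : K} {N : ℕ} {b t : K} (a : K)

@[simp]
theorem fineTerm_zero : fineTerm q N a b t 0 = 1 := by
  simp [fineTerm]

theorem rogersFineTerm_zero :
    rogersFineTerm q N a b t 0 = (1 - a * t * q) / ((1 - t) * (1 - a * t * q ^ (N + 1))) := by
  simp [rogersFineTerm, qPochhammer_succ_right]

theorem fineTerm_succ {n : ℕ} (hn : n ≤ N) (hb : 1 - b * q ^ (n + 1) ≠ 0)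
    (ht : 1 - t * q ^ (N - n) ≠ 0) :
    fineTerm q (N + 1) a b t (n + 1) * ((1 - b * q ^ (n + 1)) * (1 - t * q ^ (N - n))) =
      fineTerm q (N + 1) a b t n * (t * (1 - q ^ (N + 1 - n)) * (1 - a * q ^ (n + 1))) := by
  obtain ⟨k, rfl⟩ := Nat.exists_eq_add_of_le hn
  simp only [fineTerm, show n + k + 1 + 1 - (n + 1) = k + 1 by omega,
    show n + k + 1 + 1 - n = k + 2 by omega, show n + k + 1 - (n + 1) = k by omega,
    show n + k + 1 - n = k + 1 by omega, show n + k - n = k by omega] at ht ⊢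
  rw [qPochhammer_succ_left (q ^ (k + 1)), qPochhammer_succ_left (t * q ^ k),
    qPochhammer_succ_right (a * q), qPochhammer_succ_right (b * q), mul_assoc a, mul_assoc b,
    mul_assoc t, ← pow_succ, ← pow_succ, ← pow_succ']
  have cancel_factors (x y z : K) :
      x / (y * (1 - b * q ^ (n + 1)) * ((1 - t * q ^ k) * z)) *
        ((1 - b * q ^ (n + 1)) * (1 - t * q ^ k)) = x / (y * z) := by
    field_simp
  rw [cancel_factors]
  ring

theorem fineTerm_succ_mul_eq_sub {n : ℕ} (hn : n ≤ N) (hb : 1 - b * q ^ (n + 1) ≠ 0)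
    (ht : 1 - t * q ^ (N - n) ≠ 0) :
    fineTerm q (N + 1) a b t (n + 1) * ((1 - t) * (1 - a * t * q ^ (N + 2)) -
        (b - a * t * q) * (q ^ (n + 1) - t * q ^ (N + 1))) =
      fineTerm q (N + 1) a b t n * (t * (1 - q ^ (N + 1 - n)) * (1 - a * q ^ (n + 1))) -
        fineTerm q (N + 1) a b t (n + 1) *
          (t * (1 - q ^ (N + 1 - (n + 1))) * (1 - a * q ^ (n + 1 + 1))) := by
  have weight : (1 - t) * (1 - a * t * q ^ (N + 2)) -
      (b - a * t * q) * (q ^ (n + 1) - t * q ^ (N + 1)) =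
      (1 - b * q ^ (n + 1)) * (1 - t * q ^ (N - n)) -
        t * (1 - q ^ (N - n)) * (1 - a * q ^ (n + 1 + 1)) := by
    obtain ⟨k, rfl⟩ := Nat.exists_eq_add_of_le hn
    rw [Nat.add_sub_cancel_left]
    ring
  rw [← fineTerm_succ a hn hb ht, Nat.add_sub_add_right, ← mul_sub, weight]

theorem fineTerm_succ_shift {n : ℕ} (hn : n ≤ N) (hb : 1 - b * q ≠ 0)
    (ht : 1 - t * q ^ (N - n) ≠ 0) :
    (1 - b * q) * (fineTerm q (N + 1) a b t (n + 1) * (q ^ (n + 1) - t * q ^ (N + 1))) =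
      t * q * (1 - a * q) * (1 - q ^ (N + 1)) * fineTerm q N (a * q) (b * q) (t * q) n := by
  obtain ⟨k, rfl⟩ := Nat.exists_eq_add_of_le hn
  simp only [fineTerm, show n + k + 1 + 1 - (n + 1) = k + 1 by omega,
    show n + k + 1 - n = k + 1 by omega, show n + k + 1 - (n + 1) = k by omega,
    show n + k - n = k by omega] at ht ⊢
  rw [qPochhammer_succ_right (q ^ (k + 1)), qPochhammer_succ_left (t * q ^ k),
    qPochhammer_succ_left (a * q), qPochhammer_succ_left (b * q),
    show t * q ^ k * q = t * q * q ^ k by ring]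
  field_simp
  ring

theorem sum_fineTerm_recurrence (hb : ∀ k, 1 ≤ k → k ≤ N + 1 → 1 - b * q ^ k ≠ 0)
    (ht : ∀ k ≤ N, 1 - t * q ^ k ≠ 0) :
    (1 - b * q) * ((1 - t) * (1 - a * t * q ^ (N + 2)) *
        ∑ n ∈ range (N + 2), fineTerm q (N + 1) a b t n) =
      (1 - b * q) * ((1 - t * q ^ (N + 1)) * (1 - a * t * q)) +
        (b - a * t * q) * (t * q * (1 - a * q) * (1 - q ^ (N + 1))) *
          ∑ n ∈ range (N + 1), fineTerm q N (a * q) (b * q) (t * q) n := by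
  have hbq : 1 - b * q ≠ 0 := by simpa using hb 1 le_rfl (by omega)
  have shifted : (1 - b * q) * ∑ n ∈ range (N + 1),
      fineTerm q (N + 1) a b t (n + 1) * (q ^ (n + 1) - t * q ^ (N + 1)) =
      t * q * (1 - a * q) * (1 - q ^ (N + 1)) *
        ∑ n ∈ range (N + 1), fineTerm q N (a * q) (b * q) (t * q) n := by
    simp only [mul_sum]
    exact sum_congr rfl fun n hn =>
      fineTerm_succ_shift a (mem_range_succ_iff.1 hn) hbq (ht _ (N.sub_le n))
  have telescoped : ∑ n ∈ range (N + 1), fineTerm q (N + 1) a b t (n + 1) *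
      ((1 - t) * (1 - a * t * q ^ (N + 2)) - (b - a * t * q) * (q ^ (n + 1) - t * q ^ (N + 1))) =
      t * (1 - q ^ (N + 1)) * (1 - a * q) := by
    rw [sum_congr rfl fun n hn => fineTerm_succ_mul_eq_sub a (mem_range_succ_iff.1 hn)
      (hb _ n.succ_pos (Nat.succ_le_succ (mem_range_succ_iff.1 hn))) (ht _ (N.sub_le n)),
      sum_range_sub' fun n =>
        fineTerm q (N + 1) a b t n * (t * (1 - q ^ (N + 1 - n)) * (1 - a * q ^ (n + 1)))]
    simp
  simp only [mul_sub, sum_sub_distrib, mul_left_comm _ (b - a * t * q), ← mul_sum, ← sum_mul]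
    at telescoped shifted
  rw [sum_range_succ', fineTerm_zero]
  linear_combination (1 - b * q) * telescoped + (b - a * t * q) * shifted

theorem rogersFineTerm_succ_shift {n : ℕ} (hn : n ≤ N) (hb : 1 - b * q ≠ 0) (ht : 1 - t ≠ 0)
    (hat : 1 - a * t * q ^ (N + 2) ≠ 0) :
    (1 - b * q) * ((1 - t) * (1 - a * t * q ^ (N + 2)) *
        rogersFineTerm q (N + 1) a b t (n + 1)) =
      (b - a * t * q) * (t * q * (1 - a * q) * (1 - q ^ (N + 1))) *
        rogersFineTerm q N (a * q) (b * q) (t * q) n := by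
  have numerator := prod_succ_sub_mul_pow b (a * t * q) q n
  obtain ⟨k, rfl⟩ := Nat.exists_eq_add_of_le hn
  simp only [rogersFineTerm, show n + k + 1 + 1 - (n + 1) = k + 1 by omega,
    show n + k + 1 - n = k + 1 by omega]
  rw [qPochhammer_succ_right (q ^ (k + 1)), qPochhammer_succ_left (a * q),
    qPochhammer_succ_left (b * q), qPochhammer_succ_left t,
    qPochhammer_succ_left (a * t * q ^ (n + k + 1 + 1)),
    show a * t * q ^ (n + k + 1 + 1) * q = a * q * (t * q) * q ^ (n + k + 1) by ring]
  rw [show a * t * q * q ^ 2 = a * q * (t * q) * q by ring] at numerator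
  have cancel_factors (w x y z : K) :
      (1 - b * q) * ((1 - t) * (1 - a * t * q ^ (n + k + 2)) *
        (w / ((1 - b * q) * x * ((1 - t) * y) * ((1 - a * t * q ^ (n + k + 2)) * z)))) =
      w / (x * y * z) := by
    generalize 1 - a * t * q ^ (n + k + 2) = c at hat
    field_simp
  rw [cancel_factors, ← mul_div_assoc]
  congr 1
  linear_combination (qPochhammer (q ^ (k + 1)) q n * (1 - q ^ (n + k + 1)) * (1 - a * q) *
    qPochhammer (a * q * q) q n * t ^ (n + 1) * q ^ (n ^ 2 + n + 1) *
    (1 - a * t * q ^ (2 * n + 3))) * numerator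

theorem sum_rogersFineTerm_recurrence (hb : 1 - b * q ≠ 0) (ht : 1 - t ≠ 0)
    (hat : 1 - a * t * q ^ (N + 2) ≠ 0) :
    (1 - b * q) * ((1 - t) * (1 - a * t * q ^ (N + 2)) *
        ∑ n ∈ range (N + 2), rogersFineTerm q (N + 1) a b t n) =
      (1 - b * q) * (1 - a * t * q) +
        (b - a * t * q) * (t * q * (1 - a * q) * (1 - q ^ (N + 1))) *
          ∑ n ∈ range (N + 1), rogersFineTerm q N (a * q) (b * q) (t * q) n := by
  rw [sum_range_succ', mul_add, mul_add, rogersFineTerm_zero,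
    mul_div_cancel₀ _ (mul_ne_zero ht hat), add_comm, mul_sum, mul_sum, mul_sum]
  exact congrArg _ (sum_congr rfl fun n hn =>
    rogersFineTerm_succ_shift a (mem_range_succ_iff.1 hn) hb ht hat)

end Recurrence

theorem stmt_17_general {K : Type*} [Field K] (N : ℕ) {q a b t : K}
    (ht : ∀ k ≤ N, 1 - t * q ^ k ≠ 0)
    (hb : ∀ k, 1 ≤ k → k ≤ N → 1 - b * q ^ k ≠ 0)
    (hat : ∀ k ≤ N, 1 - a * t * q ^ (N + 1 + k) ≠ 0) :
    ∑ n ∈ range (N + 1), fineTerm q N a b t n =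
      (1 - t * q ^ N) * ∑ n ∈ range (N + 1), rogersFineTerm q N a b t n := by
  induction N generalizing a b t with
  | zero =>
    have ht0 : 1 - t ≠ 0 := by simpa using ht 0 le_rfl
    have hat0 : 1 - a * t * q ≠ 0 := by simpa using hat 0 le_rfl
    simp only [zero_add, sum_range_one, fineTerm_zero, rogersFineTerm_zero, pow_zero, pow_one,
      mul_one]
    rw [← mul_div_assoc, div_self (mul_ne_zero ht0 hat0)]
  | succ N ih =>
    have hbq : 1 - b * q ≠ 0 := by simpa using hb 1 le_rfl (by omega)
    have ht0 : 1 - t ≠ 0 := by simpa using ht 0 (by omega)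
    have hat0 : 1 - a * t * q ^ (N + 2) ≠ 0 := hat 0 (by omega)
    have shifted_identity := ih (a := a * q) (b := b * q) (t := t * q)
      (fun k hk => by convert ht (k + 1) (by omega) using 2; ring)
      (fun k _ hk => by convert hb (k + 1) (by omega) (by omega) using 2; ring)
      (fun k hk => by convert hat (k + 1) (by omega) using 2; ring)
    have fine_recurrence := sum_fineTerm_recurrence a hb fun k hk => ht k (by omega)
    rw [shifted_identity] at fine_recurrence
    refine mul_left_cancel₀ (mul_ne_zero hbq (mul_ne_zero ht0 hat0)) ?_
    linear_combination fine_recurrence -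
      (1 - t * q ^ (N + 1)) * sum_rogersFineTerm_recurrence a hbq ht0 hat0

theorem qP_eq_qPochhammer : qP = qPochhammer := rfl

theorem qBinom_mul_qPochhammer {q : ℂ} {N n : ℕ} (hn : n ≤ N) (hq : qPochhammer q q N ≠ 0) :
    qBinom q N n * qPochhammer q q n = qPochhammer (q ^ (N + 1 - n)) q n := by
  have hn0 := qPochhammer_ne_zero_of_le hq hn
  have hNn0 := qPochhammer_ne_zero_of_le hq (N.sub_le n)
  rw [qBinom, qP_eq_qPochhammer, ← qPochhammer_sub_mul q q hn, ← pow_succ', Nat.sub_add_comm hn]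
  field_simp

theorem fineN_eq_sum_fineTerm {q t : ℂ} {N : ℕ} (a b : ℂ) (hq : qPochhammer q q N ≠ 0)
    (ht : qPochhammer t q N ≠ 0) : fineN q N a b t = ∑ n ∈ range (N + 1), fineTerm q N a b t n := by
  refine sum_congr rfl fun n hn => ?_
  have hnN := mem_range_succ_iff.1 hn
  have ht0 := qPochhammer_ne_zero_of_le ht (N.sub_le n)
  rw [fineTerm, ← qBinom_mul_qPochhammer hnN hq, qP_eq_qPochhammer, ← qPochhammer_sub_mul t q hnN]
  field_simp

theorem rogersFineTerm_eq_qBinom_mul {q b : ℂ} {N n : ℕ} (a t : ℂ) (hN : 1 ≤ N) (hn : n ≤ N)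
    (hb : b ≠ 0) (hq : qPochhammer q q N ≠ 0) (hat : qPochhammer (a * t * q ^ 2) q (N - 1) ≠ 0) :
    rogersFineTerm q N a b t n =
      qBinom q N n * (qP (a * q) q n * qP q q n * qP (a * t * q / b) q n *
        qP (a * t * q ^ 2) q (N - 1) * (t * b) ^ n * q ^ (n ^ 2) * (1 - a * t * q ^ (2 * n + 1)) /
        (qP (b * q) q n * qP t q (n + 1) * qP (a * t * q ^ 2) q (N + n))) := by
  obtain ⟨M, rfl⟩ := Nat.exists_eq_add_of_le' hN
  rw [Nat.add_sub_cancel] at hat ⊢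
  have denominator : qPochhammer (a * t * q ^ 2) q (M + 1 + n) =
      qPochhammer (a * t * q ^ 2) q M * qPochhammer (a * t * q ^ (M + 1 + 1)) q (n + 1) := by
    rw [add_assoc, add_comm 1 n, qPochhammer_add, mul_assoc _ (q ^ 2), ← pow_add, add_comm 2]
  rw [rogersFineTerm, ← qBinom_mul_qPochhammer hn hq, prod_sub_mul_pow_eq hb, qP_eq_qPochhammer,
    denominator, mul_pow]
  generalize qPochhammer (a * t * q ^ 2) q M = P at hat
  field_simp

/-- Finite analogue of the Rogers–Fine identity. -/
theorem stmt_17 (N : ℕ) (hN : 1 ≤ N) (q α β τ : ℂ) (hβ : β ≠ 0)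
    (hq : ∀ n, 1 ≤ n → n ≤ N → (1 : ℂ) - q ^ n ≠ 0)
    (hτ : ∀ n, n ≤ N → 1 - τ * q ^ n ≠ 0)
    (hb : ∀ n, 1 ≤ n → n ≤ N → 1 - β * q ^ n ≠ 0)
    (hατ : ∀ n, n ≤ 2 * N → 1 - α * τ * q ^ 2 * q ^ n ≠ 0) :
    fineN q N α β τ =
      (1 - τ * q ^ N) *
        ∑ n ∈ Finset.range (N + 1),
          qBinom q N n * (qP (α * q) q n * qP q q n * qP (α * τ * q / β) q n *
            qP (α * τ * q ^ 2) q (N - 1) * (τ * β) ^ n * q ^ (n ^ 2) *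
            (1 - α * τ * q ^ (2 * n + 1)) /
            (qP (β * q) q n * qP τ q (n + 1) * qP (α * τ * q ^ 2) q (N + n))) := by
  have hqN : qPochhammer q q N ≠ 0 :=
    qPochhammer_ne_zero fun k hk => by simpa only [← pow_succ'] using hq (k + 1) k.succ_pos hk
  have hτN : qPochhammer τ q N ≠ 0 := qPochhammer_ne_zero fun k hk => hτ k hk.le
  have hατN : qPochhammer (α * τ * q ^ 2) q (N - 1) ≠ 0 :=
    qPochhammer_ne_zero fun k hk => hατ k (by omega)
  rw [fineN_eq_sum_fineTerm α β hqN hτN, stmt_17_general N hτ hb fun k hk => by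
    simpa only [mul_assoc, ← pow_add, show 2 + (N - 1 + k) = N + 1 + k by omega]
      using hατ (N - 1 + k) (by omega)]
  exact congrArg _ (sum_congr rfl fun n hn =>
    rogersFineTerm_eq_qBinom_mul α τ hN (mem_range_succ_iff.1 hn) hβ hqN hατN)
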